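/- A dihedral group of order 2t is minimal non-nilpotent if and only if t is an odd prime. -/

import Mathlib

/-!
A dihedral group `DihedralGroup n` with an odd prime `p ∣ n` is not nilpotent: it maps onto
`DihedralGroup p`, which has trivial center. For `q > 1`, multiplication by `q` on rotations
embeds `DihedralGroup n` as a proper subgroup of `DihedralGroup (q * n)`. A non-nilpotent
`DihedralGroup t` is not a `2`-group, so some odd prime `p` divides `t`; if `t = p * (q * c)` with
`q` prime, then `DihedralGroup (p * c)` is a proper non-nilpotent subgroup, so minimality forces
`t = p`. The infinite dihedral group, `t = 0`, is the case `c = 0`. Conversely, a proper subgroup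
of a group of order `2 * p` has order dividing `2` or `p`, hence is cyclic.
-/

theorem dvd_or_dvd_of_dvd_prime_mul_prime {p q d : ℕ} (hp : p.Prime) (hq : q.Prime)
    (hd : d ∣ p * q) (hne : d ≠ p * q) : d ∣ p ∨ d ∣ q := by
  obtain ⟨a, b, ha, hb, rfl⟩ := Nat.dvd_mul.1 hd
  rcases (Nat.dvd_prime hp).1 ha with rfl | rfl
  · exact .inr (by rwa [one_mul])
  rcases (Nat.dvd_prime hq).1 hb with rfl | rfl
  · exact .inl (by rw [mul_one])
  · exact absurd rfl hne

section MinimalNonNilpotent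

variable {G K : Type*} [Group G] [Group K]

/-- A group is minimal non-nilpotent if it is not nilpotent but all its proper subgroups are.
Finiteness is not part of the definition. -/
def IsMinimalNonNilpotent (G : Type*) [Group G] : Prop :=
  ¬ Group.IsNilpotent G ∧ ∀ H : Subgroup G, H ≠ ⊤ → Group.IsNilpotent H

theorem IsMinimalNonNilpotent.isNilpotent_of_injective (hG : IsMinimalNonNilpotent G)
    {f : K →* G} (hinj : Function.Injective f) (hsurj : ¬ Function.Surjective f) :
    Group.IsNilpotent K :=
  (Group.isNilpotent_congr (MonoidHom.ofInjective hinj)).2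
    (hG.2 f.range (mt MonoidHom.range_eq_top.1 hsurj))

theorem isCyclic_of_ne_top_of_card_eq_prime_mul_prime {p q : ℕ} (hp : p.Prime) (hq : q.Prime)
    (hG : Nat.card G = p * q) {H : Subgroup G} (hH : H ≠ ⊤) : IsCyclic H := by
  have : Finite G := Nat.finite_of_card_ne_zero (hG ▸ mul_ne_zero hp.ne_zero hq.ne_zero)
  have hne : Nat.card H ≠ p * q := fun h => hH (H.eq_top_of_card_eq (h.trans hG.symm))
  have : Fact p.Prime := ⟨hp⟩
  have : Fact q.Prime := ⟨hq⟩
  rcases dvd_or_dvd_of_dvd_prime_mul_prime hp hq (hG ▸ H.card_subgroup_dvd_card) hne with h | h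
  · exact isCyclic_of_card_dvd_prime h
  · exact isCyclic_of_card_dvd_prime h

end MinimalNonNilpotent

section ZModMulLeft

variable (q n : ℕ)

/-- Multiplication by `q` as an additive homomorphism from `ℤ/n` onto the multiples of `q` in
`ℤ/qn`. -/
def zmodMulLeft : ZMod n →+ ZMod (q * n) :=
  ZMod.lift n ⟨(Int.castAddHom (ZMod (q * n))).comp (AddMonoidHom.mulLeft (q : ℤ)), by
    change ((q * n : ℤ) : ZMod (q * n)) = 0
    exact_mod_cast ZMod.natCast_self (q * n)⟩

@[simp]
theorem zmodMulLeft_intCast (i : ℤ) : zmodMulLeft q n i = q * i := by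
  simp [zmodMulLeft]

variable {q n}

theorem zmodMulLeft_injective (hq : q ≠ 0) : Function.Injective (zmodMulLeft q n) := by
  refine (injective_iff_map_eq_zero _).2 fun x hx => ?_
  obtain ⟨i, rfl⟩ := ZMod.intCast_surjective x
  rw [zmodMulLeft_intCast] at hx
  have hdvd : (q * n : ℤ) ∣ q * i := by
    exact_mod_cast (ZMod.intCast_zmod_eq_zero_iff_dvd (q * i) (q * n)).1 (by exact_mod_cast hx)
  exact (ZMod.intCast_zmod_eq_zero_iff_dvd i n).2
    (Int.dvd_of_mul_dvd_mul_left (by exact_mod_cast hq) hdvd)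

theorem not_surjective_zmodMulLeft (hq : q ≠ 1) : ¬ Function.Surjective (zmodMulLeft q n) := by
  intro hsurj
  obtain ⟨x, hx⟩ := hsurj 1
  obtain ⟨i, rfl⟩ := ZMod.intCast_surjective x
  have hzero : (0 : ZMod q) = 1 := by
    simpa using congrArg (ZMod.castHom (dvd_mul_right q n) (ZMod q)) hx
  have := ZMod.nontrivial_iff.2 hq
  exact zero_ne_one hzero

end ZModMulLeft

section DihedralMap

variable {m n : ℕ}

/-- The homomorphism of dihedral groups induced by a homomorphism of their rotation groups; it
maps `sr 0` to `sr 0`. -/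
def dihedralMap (f : ZMod m →+ ZMod n) : DihedralGroup m →* DihedralGroup n where
  toFun
    | .r i => .r (f i)
    | .sr i => .sr (f i)
  map_one' := congrArg DihedralGroup.r f.map_zero
  map_mul' := by rintro (i | i) (j | j) <;> simp

@[simp]
theorem dihedralMap_r (f : ZMod m →+ ZMod n) (i : ZMod m) :
    dihedralMap f (.r i) = .r (f i) := rfl

@[simp]
theorem dihedralMap_sr (f : ZMod m →+ ZMod n) (i : ZMod m) :
    dihedralMap f (.sr i) = .sr (f i) := rfl

variable {f : ZMod m →+ ZMod n}

theorem dihedralMap_injective (hf : Function.Injective f) :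
    Function.Injective (dihedralMap f) := by
  rintro (i | i) (j | j) h <;> simp_all [hf.eq_iff]

theorem dihedralMap_surjective_iff :
    Function.Surjective (dihedralMap f) ↔ Function.Surjective f := by
  constructor
  · intro h i
    obtain ⟨j | j, hj⟩ := h (.r i)
    · exact ⟨j, DihedralGroup.r.inj hj⟩
    · nomatch hj
  · rintro h (i | i)
    · exact (h i).imp' .r fun _ => congrArg _
    · exact (h i).imp' .sr fun _ => congrArg _

end DihedralMap

section Nilpotency

variable {m n : ℕ}

theorem isNilpotent_dihedralGroup_of_dvd (hmn : m ∣ n) :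
    Group.IsNilpotent (DihedralGroup n) → Group.IsNilpotent (DihedralGroup m) := fun _ =>
  Group.nilpotent_of_surjective (dihedralMap (ZMod.castHom hmn (ZMod m)).toAddMonoidHom)
    (dihedralMap_surjective_iff.2 (ZMod.castHom_surjective hmn))

theorem not_isNilpotent_dihedralGroup_of_odd (hn : Odd n) (h1 : n ≠ 1) :
    ¬ Group.IsNilpotent (DihedralGroup n) := fun _ =>
  Group.IsNilpotent.center_ne_bot _ (DihedralGroup.center_eq_bot_of_odd_ne_one hn h1)

theorem isNilpotent_dihedralGroup_two_pow (k : ℕ) :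
    Group.IsNilpotent (DihedralGroup (2 ^ k)) :=
  (IsPGroup.of_card (p := 2) (n := k + 1)
    (by rw [DihedralGroup.nat_card, pow_succ'])).isNilpotent

theorem IsMinimalNonNilpotent.isNilpotent_dihedralGroup_of_mul {q : ℕ} (h0 : q ≠ 0) (h1 : q ≠ 1)
    (h : IsMinimalNonNilpotent (DihedralGroup (q * n))) : Group.IsNilpotent (DihedralGroup n) :=
  h.isNilpotent_of_injective (dihedralMap_injective (zmodMulLeft_injective h0))
    (mt dihedralMap_surjective_iff.1 (not_surjective_zmodMulLeft h1))

end Nilpotency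

theorem dihedral_minimal_nonNilpotent_iff_general (t : ℕ) :
    IsMinimalNonNilpotent (DihedralGroup t) ↔ t.Prime ∧ Odd t := by
  constructor
  · intro hmin
    obtain ⟨k, rfl⟩ | ⟨p, hp, ⟨m, rfl⟩, hodd⟩ := t.eq_two_pow_or_exists_odd_prime_and_dvd
    · exact absurd (isNilpotent_dihedralGroup_two_pow k) hmin.1
    suffices hm : m = 1 by simpa [hm] using And.intro hp hodd
    by_contra hm
    obtain ⟨q, hq, c, rfl⟩ := Nat.exists_prime_and_dvd hm
    rw [mul_left_comm] at hmin
    exact not_isNilpotent_dihedralGroup_of_odd hodd hp.ne_one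
      (isNilpotent_dihedralGroup_of_dvd (dvd_mul_right p c)
        (hmin.isNilpotent_dihedralGroup_of_mul hq.ne_zero hq.ne_one))
  · rintro ⟨hp, hodd⟩
    refine ⟨not_isNilpotent_dihedralGroup_of_odd hodd hp.ne_one, fun H hH => ?_⟩
    have := isCyclic_of_ne_top_of_card_eq_prime_mul_prime Nat.prime_two hp
      DihedralGroup.nat_card hH
    let := IsCyclic.commGroup (α := H)
    exact CommGroup.isNilpotent

theorem dihedral_minimal_nonNilpotent_iff (t : ℕ) (ht : 1 ≤ t) :
    (¬ Group.IsNilpotent (DihedralGroup t) ∧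
      ∀ H : Subgroup (DihedralGroup t), H ≠ ⊤ → Group.IsNilpotent H) ↔
    (t.Prime ∧ Odd t) :=
  dihedral_minimal_nonNilpotent_iff_general t
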